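/- Let ν be a real number with ν ≥ 1. For every real z with 0 < z ≤ j_{ν−1,1}, where j_{ν−1,1} is the first positive zero of J_{ν−1}, one has J_{ν−1}(z) + J_ν(z) > 0; in particular z ↦ J_{ν−1}(z) + J_ν(z) has no zero in the interval (0, j_{ν−1,1}]. -/

import Mathlib

/-- Bessel function of the first kind of real order `ν`, defined via its power series
`J_ν(z) = ∑ₘ (−1)^m / (m! Γ(ν+m+1)) (z/2)^(ν+2m)` (with real-exponent powers). -/
noncomputable def besselJ (ν z : ℝ) : ℝ :=
  ∑' m : ℕ, ((-1 : ℝ) ^ m / (Nat.factorial m * Real.Gamma (ν + m + 1))) *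
    (z / 2) ^ (ν + 2 * (m : ℝ))

/-- `x` (indexed by `k ≥ 1`) enumerates the positive zeroes of `f`: it is strictly
increasing on indices `k ≥ 1`, each `x k` is a positive zero of `f`, and every positive
zero of `f` is some `x k`. -/
def EnumPosZeros (f : ℝ → ℝ) (x : ℕ → ℝ) : Prop :=
  StrictMonoOn x (Set.Ici 1) ∧ (∀ k, 1 ≤ k → 0 < x k ∧ f (x k) = 0) ∧
    ∀ z : ℝ, 0 < z → f z = 0 → ∃ k, 1 ≤ k ∧ x k = z

noncomputable def bC (a : ℝ) (m : ℕ) : ℝ := (-1 : ℝ) ^ m / (Nat.factorial m * Real.Gamma (a + m + 1))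

noncomputable def bF (a t : ℝ) : ℝ := ∑' m : ℕ, bC a m * t ^ m

lemma gam_lb (a : ℝ) (ha : 0 ≤ a) (m : ℕ) : Real.Gamma (a + 1) ≤ Real.Gamma (a + m + 1) := by
  induction m with
  | zero => simp
  | succ k ih =>
    have hk : (0:ℝ) ≤ k := Nat.cast_nonneg k
    have h0 : 0 < Real.Gamma (a + k + 1) := Real.Gamma_pos_of_pos (by linarith)
    have h : Real.Gamma (a + (k+1 : ℕ) + 1) = (a + k + 1) * Real.Gamma (a + k + 1) := by
      rw [← Real.Gamma_add_one (by linarith)]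
      push_cast
      ring_nf
    rw [h]
    nlinarith

lemma bC_le (a : ℝ) (ha : 0 ≤ a) (m : ℕ) :
    |bC a m| ≤ (1 / Real.Gamma (a + 1)) * (1 / (Nat.factorial m : ℝ)) := by
  have h0 : 0 < Real.Gamma (a + 1) := Real.Gamma_pos_of_pos (by linarith)
  have h1 := gam_lb a ha m
  have h2 : 0 < Real.Gamma (a + m + 1) := by linarith
  have hf : (0:ℝ) < Nat.factorial m := by positivity
  unfold bC
  rw [abs_div, abs_pow, abs_neg, abs_one, one_pow, abs_of_pos (by positivity), div_mul_div_comm,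
    one_mul, mul_comm (Real.Gamma (a+1))]
  apply one_div_le_one_div_of_le (by positivity)
  gcongr

lemma bF_summable (a : ℝ) (ha : 0 ≤ a) (t : ℝ) : Summable (fun m : ℕ => bC a m * t ^ m) := by
  refine Summable.of_norm_bounded
    (g := fun m : ℕ => (1 / Real.Gamma (a + 1)) * (|t| ^ m / (Nat.factorial m : ℝ))) ?_ ?_
  · exact (Real.summable_pow_div_factorial |t|).mul_left _
  · intro m
    rw [Real.norm_eq_abs, abs_mul, abs_pow]
    calc _ ≤ (1 / Real.Gamma (a + 1)) * (1 / (Nat.factorial m : ℝ)) * |t| ^ m := by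
          gcongr
          exact bC_le a ha m
      _ = _ := by ring

lemma dsum (R : ℝ) : Summable (fun m : ℕ => (m : ℝ) * R ^ (m - 1) / (Nat.factorial m : ℝ)) := by
  rw [← summable_nat_add_iff 1]
  refine (Real.summable_pow_div_factorial R).congr ?_
  intro m
  rw [Nat.factorial_succ]
  have hf : (0:ℝ) < Nat.factorial m := by positivity
  push_cast
  field_simp

lemma dbound (a : ℝ) (ha : 0 ≤ a) (R t : ℝ) (ht : |t| ≤ R) (m : ℕ) :
    ‖bC a m * (m * t ^ (m - 1))‖ ≤
      (1 / Real.Gamma (a + 1)) * ((m : ℝ) * R ^ (m - 1) / (Nat.factorial m : ℝ)) := by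
  have h0 : 0 < Real.Gamma (a + 1) := Real.Gamma_pos_of_pos (by linarith)
  rw [Real.norm_eq_abs, abs_mul, abs_mul, abs_pow, Nat.abs_cast]
  calc _ ≤ (1 / Real.Gamma (a + 1)) * (1 / (Nat.factorial m : ℝ)) * (m * R ^ (m-1)) := by
        gcongr
        exact bC_le a ha m
    _ = _ := by ring

lemma bF_deriv (a : ℝ) (ha : 0 ≤ a) (t : ℝ) :
    HasDerivAt (bF a) (∑' m : ℕ, bC a m * (m * t ^ (m - 1))) t := by
  have hR : t ∈ Metric.ball (0:ℝ) (|t| + 1) := by simp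
  refine hasDerivAt_tsum_of_isPreconnected (t := Metric.ball (0:ℝ) (|t|+1))
    (g := fun (m:ℕ) y => bC a m * y ^ m) (g' := fun (m:ℕ) y => bC a m * (m * y ^ (m-1)))
    ((dsum (|t|+1)).mul_left (1 / Real.Gamma (a + 1)))
    Metric.isOpen_ball (convex_ball _ _).isPreconnected ?_ ?_ hR (bF_summable a ha t) hR
  · intro n y _
    exact (hasDerivAt_pow n y).const_mul _
  · intro n y hy
    refine dbound a ha _ y ?_ n
    simpa using (le_of_lt (by simpa using hy : |y| < |t| + 1))

lemma bF_rec (ν : ℝ) (hν : 1 ≤ ν) (t : ℝ) :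
    ν * bF ν t + t * (∑' m : ℕ, bC ν m * (m * t ^ (m - 1))) = bF (ν - 1) t := by
  have h1 := bF_summable ν (by linarith) t
  have h2 : Summable (fun m : ℕ => bC ν m * (m * t ^ (m - 1))) :=
    Summable.of_norm_bounded ((dsum (|t|)).mul_left (1 / Real.Gamma (ν + 1)))
      (dbound ν (by linarith) _ t le_rfl)
  unfold bF
  rw [← tsum_mul_left, ← tsum_mul_left, ← (h1.mul_left ν).tsum_add (h2.mul_left t)]
  congr 1
  ext m
  have hp : t * ((m:ℝ) * t ^ (m - 1)) = m * t ^ m := by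
    cases m with
    | zero => simp
    | succ k => simp only [Nat.add_sub_cancel]; ring
  have hm : (0:ℝ) ≤ m := Nat.cast_nonneg m
  have hc : bC (ν - 1) m = (ν + m) * bC ν m := by
    unfold bC
    rw [show ν - 1 + m + 1 = ν + m by ring, Real.Gamma_add_one (by linarith)]
    have h0 : 0 < Real.Gamma (ν + m) := Real.Gamma_pos_of_pos (by linarith)
    have : 0 < ν + m := by linarith
    have hf : (0:ℝ) < Nat.factorial m := by positivity
    field_simp
  rw [hc]
  linear_combination bC ν m * hp

lemma besselJ_eq (a z : ℝ) (hz : 0 < z) : besselJ a z = (z/2)^a * bF a ((z/2)^2) := by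
  unfold besselJ bF
  rw [← tsum_mul_left]
  congr 1
  ext m
  rw [Real.rpow_add (by positivity), ← pow_mul, ← Real.rpow_natCast (z/2) (2*m)]
  push_cast
  unfold bC
  ring

lemma bF_cont (a : ℝ) (ha : 0 ≤ a) : Continuous (bF a) :=
  continuous_iff_continuousAt.2 fun t => (bF_deriv a ha t).continuousAt

lemma bF_zero (a : ℝ) (ha : 0 ≤ a) : 0 < bF a 0 := by
  unfold bF
  rw [tsum_eq_single 0 (by intro m hm; simp [hm])]
  have h0 : 0 < Real.Gamma (a + 1) := Real.Gamma_pos_of_pos (by linarith)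
  simp [bC, h0]

lemma main_pos (ν : ℝ) (hν : 1 ≤ ν) (T : ℝ) (hT : 0 < T)
    (h : ∀ t, 0 < t → t < T → bF (ν - 1) t ≠ 0) :
    (∀ t, 0 < t → t < T → 0 < bF (ν - 1) t) ∧ ∀ t, 0 < t → t ≤ T → 0 < bF ν t := by
  have A : ∀ t, 0 < t → t < T → 0 < bF (ν - 1) t := by
    intro t h0 h1
    by_contra hn
    push Not at hn
    obtain ⟨s, hs, hs0⟩ := intermediate_value_Icc' h0.le (bF_cont (ν-1) (by linarith)).continuousOn
      (show (0:ℝ) ∈ Set.Icc _ _ from ⟨hn, (bF_zero (ν-1) (by linarith)).le⟩)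
    have hs' : s ≠ 0 := by
      rintro rfl
      exact (bF_zero (ν-1) (by linarith)).ne' hs0
    exact h s (lt_of_le_of_ne hs.1 hs'.symm) (lt_of_le_of_lt hs.2 h1) hs0
  refine ⟨A, ?_⟩
  have hd : ∀ t : ℝ, HasDerivAt (fun t => t ^ ν * bF ν t)
      (ν * t ^ (ν - 1) * bF ν t + t ^ ν * (∑' m : ℕ, bC ν m * (m * t ^ (m - 1)))) t := fun t =>
    (Real.hasDerivAt_rpow_const (Or.inr hν)).mul (bF_deriv ν (by linarith) t)
  have hm : StrictMonoOn (fun t => t ^ ν * bF ν t) (Set.Icc 0 T) := by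
    apply strictMonoOn_of_deriv_pos (convex_Icc _ _)
    · exact fun t _ => (hd t).continuousAt.continuousWithinAt
    · intro t ht
      rw [interior_Icc] at ht
      rw [(hd t).deriv]
      have h2 : t ^ ν = t ^ (ν - 1) * t := by
        rw [← Real.rpow_add_one ht.1.ne']; ring_nf
      have h3 : 0 < t ^ (ν - 1) * bF (ν - 1) t :=
        mul_pos (Real.rpow_pos_of_pos ht.1 _) (A t ht.1 ht.2)
      rw [← bF_rec ν hν t] at h3
      rw [h2]
      linarith
  intro t h0 h1
  have := hm ⟨le_rfl, hT.le⟩ ⟨h0.le, h1⟩ h0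
  simp only [Real.zero_rpow (by linarith : ν ≠ 0), zero_mul] at this
  exact (pos_iff_pos_of_mul_pos this).1 (Real.rpow_pos_of_pos h0 _)


/-- For `ν ≥ 1` and every `0 < z ≤ j_{ν−1,1}`, `J_{ν−1}(z) + J_ν(z) > 0`;
in particular `z ↦ J_{ν−1}(z) + J_ν(z)` has no zero in `(0, j_{ν−1,1}]`. -/
theorem stmt8 (ν : ℝ) (hν : 1 ≤ ν) (jm1 : ℕ → ℝ)
    (hjm1 : EnumPosZeros (besselJ (ν - 1)) jm1) :
    (∀ z : ℝ, 0 < z → z ≤ jm1 1 → 0 < besselJ (ν - 1) z + besselJ ν z) ∧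
    (∀ z ∈ Set.Ioc (0 : ℝ) (jm1 1), besselJ (ν - 1) z + besselJ ν z ≠ 0) := by
  have key : ∀ z : ℝ, 0 < z → z ≤ jm1 1 → 0 < besselJ (ν - 1) z + besselJ ν z := by
    obtain ⟨hmono, hz, hall⟩ := hjm1
    obtain ⟨hj, hj0⟩ := hz 1 le_rfl
    have hne : ∀ t, 0 < t → t < (jm1 1 / 2) ^ 2 → bF (ν - 1) t ≠ 0 := by
      intro t h0 h1 hF
      have hs : 0 < 2 * Real.sqrt t := by positivity
      have hsq : (2 * Real.sqrt t / 2) ^ 2 = t := by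
        rw [mul_div_cancel_left₀ _ (by norm_num), Real.sq_sqrt h0.le]
      obtain ⟨k, hk, hkz⟩ := hall (2 * Real.sqrt t) hs (by
        rw [besselJ_eq _ _ hs, hsq, hF, mul_zero])
      have h2 : jm1 1 ≤ jm1 k := hmono.monotoneOn (by simp) (by simpa using hk) hk
      have h3 : (jm1 1 / 2) ^ 2 ≤ t := by
        rw [← hsq, ← hkz]
        gcongr
      linarith
    obtain ⟨hA, hB⟩ := main_pos ν hν _ (by positivity) hne
    intro z h0 h1
    have hle : (z/2)^2 ≤ (jm1 1 / 2)^2 := by gcongr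
    have hν0 : 0 < besselJ ν z := by
      rw [besselJ_eq _ _ h0]
      exact mul_pos (Real.rpow_pos_of_pos (by positivity) _) (hB _ (by positivity) hle)
    rcases h1.eq_or_lt with h | h
    · rw [h, hj0, ← h]; linarith
    · have : 0 < besselJ (ν - 1) z := by
        rw [besselJ_eq _ _ h0]
        exact mul_pos (Real.rpow_pos_of_pos (by positivity) _)
          (hA _ (by positivity) (by gcongr))
      linarith
  exact ⟨key, fun z hz => (key z hz.1 hz.2).ne'⟩
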